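/- For every real constant δ > 0 and every integer k ≥ 2 there exists a constant C (depending only on δ and k) such that: for every finite undirected unweighted simple graph G on n vertices there is a subgraph H ⊆ G with at most C · n^(1 + (1+δ)/(2^(k+1) − 1)) edges such that for every pair of vertices u, v connected in G, dist_H(u,v) ≤ dist_G(u,v) + C · (dist_G(u,v))^(1 − 1/k). -/

import Mathlib

namespace SAS

/-- There is a walk of length at most `l` from `x` to `y`. -/
def Rch {V : Type} (G : SimpleGraph V) (l : ℕ) (x y : V) : Prop :=
  ∃ W : G.Walk x y, W.length ≤ l

/-- The graph with a given finite edge set. -/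
def gr {V : Type} (F : Finset (Sym2 V)) : SimpleGraph V :=
  SimpleGraph.fromEdgeSet (F : Set (Sym2 V))

/-- `F` consists of edges of `G`. -/
def SubE {V : Type} (G : SimpleGraph V) (F : Finset (Sym2 V)) : Prop :=
  ∀ e ∈ F, e ∈ G.edgeSet

section basic
variable {V : Type} {G G' : SimpleGraph V} {x y z : V} {a b : ℕ}

theorem Rch.refl (G : SimpleGraph V) (l : ℕ) (x : V) : Rch G l x x :=
  ⟨SimpleGraph.Walk.nil, by simp⟩

theorem Rch.trans (h : Rch G a x y) (h' : Rch G b y z) : Rch G (a + b) x z := by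
  obtain ⟨W, hW⟩ := h
  obtain ⟨W', hW'⟩ := h'
  exact ⟨W.append W', by rw [SimpleGraph.Walk.length_append]; omega⟩

theorem Rch.symm (h : Rch G a x y) : Rch G a y x := by
  obtain ⟨W, hW⟩ := h
  exact ⟨W.reverse, by simpa using hW⟩

theorem Rch.len (h : Rch G a x y) (hab : a ≤ b) : Rch G b x y := by
  obtain ⟨W, hW⟩ := h
  exact ⟨W, hW.trans hab⟩

theorem Rch.mono (h : Rch G a x y) (hG : G ≤ G') : Rch G' a x y := by
  obtain ⟨W, hW⟩ := h
  exact ⟨W.mapLe hG, by simpa using hW⟩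

theorem Rch.dist_le (h : Rch G a x y) : G.dist x y ≤ a := by
  obtain ⟨W, hW⟩ := h
  exact (SimpleGraph.dist_le W).trans hW

theorem Rch.reach (h : Rch G a x y) : G.Reachable x y := by
  obtain ⟨W, hW⟩ := h
  exact ⟨W⟩

theorem Rch.of_reach (h : G.Reachable x y) : Rch G (G.dist x y) x y := by
  obtain ⟨W, hW⟩ := h.exists_walk_length_eq_dist
  exact ⟨W, hW.le⟩

theorem Rch.of_adj (h : G.Adj x y) : Rch G 1 x y :=
  ⟨h.toWalk, by simp⟩

theorem tri (h : G.Reachable x y) (h' : G.Reachable y z) :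
    G.dist x z ≤ G.dist x y + G.dist y z :=
  ((Rch.of_reach h).trans (Rch.of_reach h')).dist_le

theorem gr_mono {F F' : Finset (Sym2 V)} (h : F ⊆ F') : gr F ≤ gr F' :=
  SimpleGraph.fromEdgeSet_mono (by exact_mod_cast h)

theorem gr_le {F : Finset (Sym2 V)} (h : SubE G F) : gr F ≤ G := by
  intro u v huv
  rw [gr, SimpleGraph.fromEdgeSet_adj] at huv
  exact (SimpleGraph.mem_edgeSet G).1 (h _ (by exact_mod_cast huv.1))

theorem gr_adj {F : Finset (Sym2 V)} {u v : V} (h : s(u, v) ∈ F) (hne : u ≠ v) :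
    (gr F).Adj u v := by
  rw [gr, SimpleGraph.fromEdgeSet_adj]
  exact ⟨by exact_mod_cast h, hne⟩

theorem SubE.union [DecidableEq V] {F F' : Finset (Sym2 V)} (h : SubE G F) (h' : SubE G F') :
    SubE G (F ∪ F') := by
  intro e he
  rcases Finset.mem_union.1 he with he | he
  · exact h e he
  · exact h' e he

theorem Rch.stretch {K : SimpleGraph V} {M : ℕ} (hM : ∀ u v, G.Adj u v → Rch K M u v)
    (h : Rch G a x y) : Rch K (M * a) x y := by
  obtain ⟨W, hW⟩ := h
  refine Rch.len (a := M * W.length) ?_ (Nat.mul_le_mul_left _ hW)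
  clear hW
  induction W with
  | nil => exact Rch.refl _ _ _
  | cons h p ih =>
    have := (hM _ _ h).trans ih
    rw [SimpleGraph.Walk.length_cons]
    exact this.len (by ring_nf; rfl)

theorem chain {K : SimpleGraph V} (X : ℕ → V) (l : ℕ → ℕ) (j t : ℕ) (hjt : j ≤ t)
    (h : ∀ i, j ≤ i → i < t → Rch K (l i) (X i) (X (i + 1))) :
    Rch K (∑ i ∈ Finset.Ico j t, l i) (X j) (X t) := by
  induction t, hjt using Nat.le_induction with
  | base => exact Rch.refl _ _ _
  | succ t ht ih =>
    rw [Finset.sum_Ico_succ_top ht]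
    exact (ih fun i h1 h2 => h i h1 (by omega)).trans (h t ht (by omega))

/-- A geodesic. -/
theorem geodesic {s t : V} (h : G.Reachable s t) :
    ∃ y : ℕ → V, y 0 = s ∧ (∀ i, G.dist s t ≤ i → y i = t) ∧
      ∀ i j, i ≤ j → j ≤ G.dist s t → Rch G (j - i) (y i) (y j) ∧ G.dist (y i) (y j) = j - i := by
  obtain ⟨W, hW⟩ := h.exists_walk_length_eq_dist
  have key : ∀ i j, i ≤ j → j ≤ G.dist s t → Rch G (j - i) (W.getVert i) (W.getVert j) := by
    intro i j hij hj
    have := chain (K := G) W.getVert (fun _ => 1) i j hij (fun a ha hb =>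
      Rch.of_adj (W.adj_getVert_succ (by omega)))
    simpa using this
  refine ⟨W.getVert, W.getVert_zero, fun i hi => W.getVert_of_length_le (by omega), ?_⟩
  intro i j hij hj
  refine ⟨key i j hij hj, le_antisymm (key i j hij hj).dist_le ?_⟩
  have h1 := key 0 i (by omega) (by omega)
  have h3 := key j (G.dist s t) hj le_rfl
  have h2 := Rch.of_reach (key i j hij hj).reach
  rw [W.getVert_zero] at h1
  rw [W.getVert_of_length_le (i := G.dist s t) (by omega)] at h3
  have := ((h1.trans h2).trans h3).dist_le
  omega

end basic

/-- First index at which the prefix sums reach `θ`. -/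
theorem thr_fwd (a : ℕ → ℝ) (p : ℕ) (θ : ℝ) (h0 : 0 < θ)
    (h1 : θ ≤ ∑ i ∈ Finset.range p, a i) :
    ∃ f < p, (∑ i ∈ Finset.range f, a i) < θ ∧ θ ≤ ∑ i ∈ Finset.range (f + 1), a i := by
  induction p with
  | zero => simp at h1; linarith
  | succ p ih =>
    by_cases h : θ ≤ ∑ i ∈ Finset.range p, a i
    · obtain ⟨f, hf, h2⟩ := ih h
      exact ⟨f, by omega, h2⟩
    · exact ⟨p, by omega, not_le.1 h, h1⟩

theorem thr_bwd (a : ℕ → ℝ) (p : ℕ) (θ : ℝ) (h0 : 0 < θ)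
    (h1 : θ ≤ ∑ i ∈ Finset.range p, a i) :
    ∃ f : ℕ, f < p ∧ (∑ i ∈ Finset.Ico (f + 1) p, a i) < θ ∧ θ ≤ ∑ i ∈ Finset.Ico f p, a i := by
  by_contra hcon
  push Not at hcon
  have : ∀ q : ℕ, q ≤ p → θ ≤ ∑ i ∈ Finset.Ico q p, a i := by
    intro q
    induction q with
    | zero => intro _; rw [← Finset.range_eq_Ico]; exact h1
    | succ q ih =>
      intro hq
      by_contra! h
      have := hcon q (by omega) h
      linarith [ih (by omega)]
  have := this p le_rfl
  simp at this
  linarith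

theorem double_count {V : Type} [DecidableEq V] (w : ℕ → Finset V) (p m : ℕ) (I : Finset ℕ)
    (hI : I ⊆ Finset.range p)
    (hm : ∀ v, ((Finset.range p).filter (fun i => v ∈ w i)).card ≤ m) :
    ∑ i ∈ I, (w i).card ≤ m * (I.biUnion w).card := by
  have h1 : ∀ i ∈ I, (w i).card = ∑ v ∈ I.biUnion w, if v ∈ w i then 1 else 0 := by
    intro i hi
    rw [← Finset.card_filter]
    congr 1
    ext v
    simp only [Finset.mem_filter, Finset.mem_biUnion]
    exact ⟨fun h => ⟨⟨i, hi, h⟩, h⟩, fun h => h.2⟩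
  rw [Finset.sum_congr rfl h1, Finset.sum_comm, mul_comm, ← smul_eq_mul]
  refine Finset.sum_le_card_nsmul _ _ _ fun v _ => ?_
  rw [← Finset.card_filter]
  exact (Finset.card_le_card (Finset.filter_subset_filter _ hI)).trans (hm v)

/-- Trees in balls. -/
theorem ball_tree {V : Type} [DecidableEq V] (G : SimpleGraph V) (b : ℕ → Finset V) (v : V)
    (h0 : b 0 = {v}) (hsub : ∀ i, b i ⊆ b (i + 1))
    (hpar : ∀ i, ∀ w ∈ b (i + 1), w ∉ b i → ∃ u ∈ b i, G.Adj u w) (i : ℕ) :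
    ∃ T : Finset (Sym2 V), SubE G T ∧ T.card ≤ (b i).card ∧ ∀ u ∈ b i, Rch (gr T) i v u := by
  induction i with
  | zero =>
    refine ⟨∅, by simp [SubE], by simp, ?_⟩
    intro u hu
    rw [h0, Finset.mem_singleton] at hu
    subst hu
    exact Rch.refl _ _ _
  | succ i ih =>
    obtain ⟨T, hT, hc, hr⟩ := ih
    have : ∀ w, ∃ u, w ∈ b (i + 1) \ b i → u ∈ b i ∧ G.Adj u w := by
      intro w
      by_cases h : w ∈ b (i + 1) \ b i
      · rw [Finset.mem_sdiff] at h
        obtain ⟨u, hu⟩ := hpar i w h.1 h.2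
        exact ⟨u, fun _ => hu⟩
      · exact ⟨w, fun h' => absurd h' h⟩
    choose par hp using this
    refine ⟨T ∪ (b (i + 1) \ b i).image (fun w => s(par w, w)), ?_, ?_, ?_⟩
    · refine hT.union ?_
      intro e he
      obtain ⟨w, hw, rfl⟩ := Finset.mem_image.1 he
      exact (SimpleGraph.mem_edgeSet G).2 (hp w hw).2
    · refine (Finset.card_union_le _ _).trans ?_
      have h1 := Finset.card_image_le (s := b (i + 1) \ b i) (f := fun w => s(par w, w))
      have h2 := Finset.card_sdiff_add_card_eq_card (hsub i)
      omega
    · intro u hu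
      by_cases h : u ∈ b i
      · exact ((hr u h).mono (gr_mono Finset.subset_union_left)).len (by omega)
      · have hu' : u ∈ b (i + 1) \ b i := Finset.mem_sdiff.2 ⟨hu, h⟩
        refine ((hr _ (hp u hu').1).mono (gr_mono Finset.subset_union_left)).trans
          (Rch.of_adj (gr_adj ?_ (hp u hu').2.ne))
        exact Finset.mem_union_right _ (Finset.mem_image.2 ⟨u, hu', rfl⟩)

open Classical in
/-- Multiplicative spanners by ball carving. -/
theorem mult_spanner {V : Type} [Fintype V] (G : SimpleGraph V) (z : ℝ) (t : ℕ) (ht : 0 < t) (hz : 1 ≤ z)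
    (hzt : (Fintype.card V : ℝ) ≤ z ^ t) (S : Finset V) :
    ∃ F : Finset (Sym2 V), SubE G F ∧ (F.card : ℝ) ≤ z * S.card ∧
      ∀ u ∈ S, ∀ v ∈ S, G.Adj u v → Rch (gr F) (2 * t) u v := by
  induction S using Finset.strongInduction with
  | H S ih =>
    rcases S.eq_empty_or_nonempty with rfl | ⟨v, hv⟩
    · exact ⟨∅, by simp [SubE], by simp, by simp⟩
    let b : ℕ → Finset V := fun i => Nat.rec {v}
      (fun _ B => B ∪ S.filter (fun w => ∃ u ∈ B, G.Adj u w)) i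
    have hb0 : b 0 = {v} := rfl
    have hbs : ∀ i, b (i + 1) = b i ∪ S.filter (fun w => ∃ u ∈ b i, G.Adj u w) := fun i => rfl
    have hbS : ∀ i, b i ⊆ S := by
      intro i
      induction i with
      | zero => rw [hb0]; simpa using hv
      | succ i ih => rw [hbs]; exact Finset.union_subset ih (Finset.filter_subset _ _)
    have hsub : ∀ i, b i ⊆ b (i + 1) := fun i => by rw [hbs]; exact Finset.subset_union_left
    have hpos : ∀ i, v ∈ b i := by
      intro i
      induction i with
      | zero => rw [hb0]; simp
      | succ i ih => exact hsub i ih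
    have hpar : ∀ i, ∀ w ∈ b (i + 1), w ∉ b i → ∃ u ∈ b i, G.Adj u w := by
      intro i w hw hw'
      rw [hbs, Finset.mem_union] at hw
      rcases hw with hw | hw
      · exact absurd hw hw'
      · exact (Finset.mem_filter.1 hw).2
    have hex : ∃ i < t, ((b (i + 1)).card : ℝ) ≤ z * (b i).card := by
      by_contra! hcon
      have : ∀ i, i ≤ t → z ^ i ≤ (b i).card ∧ (0 < i → z ^ i < (b i).card) := by
        intro i
        induction i with
        | zero => intro _; simp [hb0]
        | succ i ih =>
          intro hi
          have h1 := (ih (by omega)).1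
          have h2 := hcon i (by omega)
          have : z ^ (i + 1) < (b (i + 1)).card := by
            refine lt_of_le_of_lt ?_ h2
            rw [pow_succ, mul_comm]
            gcongr
          exact ⟨this.le, fun _ => this⟩
      have h1 := (this t le_rfl).2 ht
      have h2 : ((b t).card : ℝ) ≤ Fintype.card V := by exact_mod_cast Finset.card_le_univ _
      linarith
    obtain ⟨i, hi, hcard⟩ := hex
    obtain ⟨T, hT, hTc, hTr⟩ := ball_tree G b v hb0 hsub hpar (i + 1)
    obtain ⟨F, hF, hFc, hFr⟩ := ih (S \ b i) (Finset.sdiff_ssubset (hbS i) ⟨v, hpos i⟩)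
    refine ⟨T ∪ F, hT.union hF, ?_, ?_⟩
    · have h1 : ((T ∪ F).card : ℝ) ≤ T.card + F.card := by exact_mod_cast Finset.card_union_le _ _
      have h2 : ((S \ b i).card : ℝ) + (b i).card = S.card := by
        exact_mod_cast Finset.card_sdiff_add_card_eq_card (hbS i)
      have h3 : (T.card : ℝ) ≤ (b (i + 1)).card := by exact_mod_cast hTc
      rw [← h2]
      linarith
    · have key : ∀ u ∈ S, ∀ w ∈ S, G.Adj u w → u ∈ b i → Rch (gr (T ∪ F)) (2 * t) u w := by
        intro u hu w hw huw hub
        have hw' : w ∈ b (i + 1) := by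
          rw [hbs]
          exact Finset.mem_union_right _ (Finset.mem_filter.2 ⟨hw, u, hub, huw⟩)
        have := ((hTr u (hsub i hub)).symm.trans (hTr w hw')).mono
          (gr_mono (Finset.subset_union_left (s₂ := F)))
        exact this.len (by omega)
      intro u hu w hw huw
      rcases Classical.em (u ∈ b i) with h1 | h1
      · exact key u hu w hw huw h1
      rcases Classical.em (w ∈ b i) with h2 | h2
      · exact (key w hw u hu huw.symm h2).symm
      · exact (hFr u (Finset.mem_sdiff.2 ⟨hu, h1⟩) w (Finset.mem_sdiff.2 ⟨hw, h2⟩) huw).mono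
          (gr_mono Finset.subset_union_right)

end SAS


namespace SAS

open Classical in
/-- Closed balls of `G`. -/
noncomputable def ball {V : Type} [Fintype V] (G : SimpleGraph V) (ρ : ℕ) (s : V) : Finset V :=
  Finset.univ.filter (fun v => Rch G ρ s v)

theorem mem_ball {V : Type} [Fintype V] {G : SimpleGraph V} {ρ : ℕ} {s v : V} :
    v ∈ ball G ρ s ↔ Rch G ρ s v := by
  simp [ball]

/-- Pairs at distance at most `r` are joined, with additive error `E`, by a walk
with few edges outside of `F`. -/
def Pr {V : Type} [Fintype V] [DecidableEq V] (G : SimpleGraph V) (F : Finset (Sym2 V))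
    (r E : ℕ) (lam : ℝ) (c : ℕ) : Prop :=
  ∀ s t, Rch G r s t → ∃ E' : Finset (Sym2 V), SubE G E' ∧
    (E'.card : ℝ) ≤ lam * (ball G (c * r) s).card ∧ Rch (gr (F ∪ E')) (G.dist s t + E) s t

/-- `u`, `v` are joined in `F` with additive error `g`. -/
def Good {V : Type} (G : SimpleGraph V) (F : Finset (Sym2 V)) (g : ℕ) (u v : V) : Prop :=
  Rch (gr F) (G.dist u v + g) u v

/-- State of the shortcutting procedure. -/
def St {V : Type} [DecidableEq V] (G : SimpleGraph V) (F : Finset (Sym2 V)) (lam : ℝ)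
    (c r p : ℕ) (s t : V) (K m : ℕ) (Sb : ℝ) : Prop :=
  ∃ (x : ℕ → V) (w : ℕ → Finset V) (l : ℕ → ℕ), x 0 = s ∧ x p = t ∧
    (∀ i < p, ∃ E : Finset (Sym2 V), SubE G E ∧ (E.card : ℝ) ≤ lam * (w i).card ∧
      Rch (gr (F ∪ E)) (l i) (x i) (x (i + 1))) ∧
    ∑ i ∈ Finset.range p, l i ≤ G.dist s t + K * r ∧
    (∀ i < p, ∀ v ∈ w i, Rch G (c * r) (x i) v) ∧
    (∀ i < p, (w i).Nonempty → Rch G r (x i) (x (i + 1))) ∧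
    (∀ v, ((Finset.range p).filter (fun i => v ∈ w i)).card ≤ m) ∧
    ∑ i ∈ Finset.range p, ((w i).card : ℝ) ≤ Sb

theorem init_state {V : Type} [Fintype V] [DecidableEq V] {G : SimpleGraph V}
    {F : Finset (Sym2 V)} {r E c R α : ℕ} {lam : ℝ} (hP : Pr G F r E lam c) (hr : 0 < r)
    (hRE : R * E ≤ α * r) {s t : V} (h : Rch G (R * r) s t) :
    St G F lam c r R s t α (2 * c + 1) ((2 * c + 1 : ℕ) * Fintype.card V) := by
  obtain ⟨y, hy0, hyt, hyd⟩ := geodesic h.reach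
  have hD : G.dist s t ≤ R * r := h.dist_le
  set D := G.dist s t with hDdef
  have hymin : ∀ i, y i = y (min i D) := by
    intro i
    rcases le_total i D with hi | hi
    · rw [min_eq_left hi]
    · rw [min_eq_right hi, hyt i hi, hyt D le_rfl]
  have hy : ∀ i j, i ≤ j → Rch G (min j D - min i D) (y i) (y j) ∧
      G.dist (y i) (y j) = min j D - min i D := by
    intro i j hij
    rw [hymin i, hymin j]
    exact hyd _ _ (min_le_min_right _ hij) (min_le_right _ _)
  have hstep : ∀ i : ℕ, Rch G r (y (i * r)) (y ((i + 1) * r)) := by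
    intro i
    have h1 : (i + 1) * r = i * r + r := by ring
    refine (hy (i * r) ((i + 1) * r) (by omega)).1.len ?_
    rw [h1]
    omega
  have hmult : ∀ v, ((Finset.range R).filter
      (fun i => v ∈ (if i * r < D then ball G (c * r) (y (i * r)) else ∅))).card ≤ 2 * c + 1 := by
    intro v
    set I := (Finset.range R).filter
      (fun i => v ∈ (if i * r < D then ball G (c * r) (y (i * r)) else ∅)) with hI
    rcases I.eq_empty_or_nonempty with h0 | hne
    · rw [h0]; simp
    have hmem : ∀ i ∈ I, i * r < D ∧ Rch G (c * r) (y (i * r)) v := by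
      intro i hi
      have := (Finset.mem_filter.1 hi).2
      split_ifs at this with h1
      · exact ⟨h1, mem_ball.1 this⟩
      · simp at this
    have hsub : I ⊆ Finset.Icc (I.min' hne) (I.min' hne + 2 * c) := by
      intro i hi
      have hle := I.min'_le i hi
      obtain ⟨h1, h2⟩ := hmem i hi
      obtain ⟨h3, h4⟩ := hmem _ (I.min'_mem hne)
      set i0 := I.min' hne
      have h5 := (h4.trans h2.symm).dist_le
      rw [(hy (i0 * r) (i * r) (Nat.mul_le_mul_right _ hle)).2, min_eq_left h1.le,
        min_eq_left h3.le] at h5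
      rw [Finset.mem_Icc]
      refine ⟨hle, ?_⟩
      have h6 : i * r ≤ (i0 + 2 * c) * r := by
        have : (i0 + 2 * c) * r = i0 * r + (c * r + c * r) := by ring
        omega
      exact Nat.le_of_mul_le_mul_right h6 hr
    refine (Finset.card_le_card hsub).trans ?_
    rw [Nat.card_Icc]
    omega
  refine ⟨fun i => y (i * r), fun i => if i * r < D then ball G (c * r) (y (i * r)) else ∅,
    fun i => G.dist (y (i * r)) (y ((i + 1) * r)) + E, by simp [hy0], hyt _ hD, ?_, ?_, ?_, ?_,
    hmult, ?_⟩
  · intro i _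
    by_cases hi : i * r < D
    · simp only [hi, if_true]
      exact hP _ _ (hstep i)
    · refine ⟨∅, by simp [SubE], by simp [hi], ?_⟩
      have h1 : (i + 1) * r = i * r + r := by ring
      have e1 : y (i * r) = t := hyt _ (by omega)
      have e2 : y ((i + 1) * r) = t := hyt _ (by omega)
      simp only [e1, e2]
      exact Rch.refl _ _ _
  · have hsum : ∀ q : ℕ, ∑ i ∈ Finset.range q, G.dist (y (i * r)) (y ((i + 1) * r)) =
        min (q * r) D := by
      intro q
      induction q with
      | zero => simp
      | succ q ih =>
        have h1 : (q + 1) * r = q * r + r := by ring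
        rw [Finset.sum_range_succ, ih, (hy (q * r) ((q + 1) * r) (by omega)).2, h1]
        omega
    rw [Finset.sum_add_distrib, hsum, Finset.sum_const, Finset.card_range, smul_eq_mul]
    have := min_le_right (R * r) D
    omega
  · intro i _ v hv
    simp only at hv
    split_ifs at hv with h1
    · exact mem_ball.1 hv
    · simp at hv
  · intro i _ _
    exact hstep i
  · have := double_count (fun i => if i * r < D then ball G (c * r) (y (i * r)) else ∅) R
      (2 * c + 1) (Finset.range R) (Finset.Subset.refl _) hmult
    have h2 := this.trans (Nat.mul_le_mul_left _ (Finset.card_le_univ _))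
    exact_mod_cast h2

theorem sum_split3 {M : Type} [AddCommMonoid M] (f : ℕ → M) (j e p : ℕ) (h1 : j ≤ e) (h2 : e < p) :
    ∑ i ∈ Finset.range p, f i = ∑ i ∈ Finset.range j, f i + ∑ i ∈ Finset.Ico j (e + 1), f i
      + ∑ i ∈ Finset.Ico (e + 1) p, f i := by
  rw [Finset.range_eq_Ico, Finset.range_eq_Ico, Finset.sum_Ico_consecutive _ (by omega) (by omega),
    Finset.sum_Ico_consecutive _ (by omega) (by omega)]

theorem advance {V : Type} [Fintype V] [DecidableEq V] {G : SimpleGraph V}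
    {F : Finset (Sym2 V)} {r c p K m M : ℕ} {lam Sb Y ε : ℝ} {s t : V}
    (hlam : 0 < lam) (hY : 0 ≤ Y) (hε : 0 < ε) (hε' : ε ≤ 1 / 4)
    (hM : ∀ u v, G.Adj u v → Rch (gr F) M u v) (hF : SubE G F)
    (hst : St G F lam c r p s t K m Sb) :
    (∃ E : Finset (Sym2 V), SubE G E ∧ (E.card : ℝ) ≤ Y ∧
      Rch (gr (F ∪ E)) (G.dist s t + K * r) s t) ∨
    (∃ (F' : Finset (Sym2 V)) (S : ℝ) (A B : Finset V), F ⊆ F' ∧ SubE G F' ∧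
      (F'.card : ℝ) ≤ F.card + lam * S ∧ Y < lam * S ∧
      ε * S ≤ m * A.card ∧ ε * S ≤ m * B.card ∧
      ∀ u ∈ A, ∀ v ∈ B, ¬ Good G F ((K + 2 * c + 2 * M * c) * r) u v ∧
        Good G F' ((K + 2 * c + 2 * M * c) * r) u v ∧
        Rch G (G.dist s t + K * r + c * r) s u ∧
        Rch G (G.dist s t + K * r + 2 * c * r) u v) ∨
    St G F lam c r p s t (2 * K + 4 * c + 4 * M * c + M) m (2 * ε * Sb) := by
  obtain ⟨x, w, l, hx0, hxp, hpc, hlen, hball, hnext, hmult, hSb⟩ := hst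
  have hpc' : ∀ i, ∃ E : Finset (Sym2 V), i < p → SubE G E ∧ (E.card : ℝ) ≤ lam * (w i).card ∧
      Rch (gr (F ∪ E)) (l i) (x i) (x (i + 1)) := by
    intro i
    by_cases hi : i < p
    · obtain ⟨E, hE⟩ := hpc i hi
      exact ⟨E, fun _ => hE⟩
    · exact ⟨∅, fun h => absurd h hi⟩
  choose Ei hEi using hpc'
  set S : ℝ := ∑ i ∈ Finset.range p, ((w i).card : ℝ) with hS
  set EE := (Finset.range p).biUnion Ei with hEE
  have hEEsub : SubE G EE := by
    intro e he
    obtain ⟨i, hi, he⟩ := Finset.mem_biUnion.1 he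
    exact (hEi i (Finset.mem_range.1 hi)).1 e he
  have hEEcard : (EE.card : ℝ) ≤ lam * S := by
    have h1 : (EE.card : ℝ) ≤ ∑ i ∈ Finset.range p, ((Ei i).card : ℝ) := by
      exact_mod_cast Finset.card_biUnion_le
    refine h1.trans ?_
    rw [hS, Finset.mul_sum]
    exact Finset.sum_le_sum fun i hi => (hEi i (Finset.mem_range.1 hi)).2.1
  have hstep : ∀ i, i < p → Rch (gr (F ∪ EE)) (l i) (x i) (x (i + 1)) := by
    intro i hi
    refine (hEi i hi).2.2.mono (gr_mono (Finset.union_subset_union_right ?_))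
    exact Finset.subset_biUnion_of_mem Ei (Finset.mem_range.2 hi)
  have hF'sub : SubE G (F ∪ EE) := hF.union hEEsub
  have hch : ∀ j e, j ≤ e → e ≤ p →
      Rch (gr (F ∪ EE)) (∑ i ∈ Finset.Ico j e, l i) (x j) (x e) := by
    intro j e hje hep
    exact chain x l j e hje fun i _ h2 => hstep i (by omega)
  have hchG : ∀ j e, j ≤ e → e ≤ p → Rch G (∑ i ∈ Finset.Ico j e, l i) (x j) (x e) :=
    fun j e h1 h2 => (hch j e h1 h2).mono (gr_le hF'sub)
  by_cases hdone : lam * S ≤ Y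
  · left
    refine ⟨EE, hEEsub, hEEcard.trans hdone, ?_⟩
    have := hch 0 p (by omega) le_rfl
    rw [hx0, hxp, ← Finset.range_eq_Ico] at this
    exact this.len hlen
  right
  rw [not_le] at hdone
  have hSpos : 0 < S := by
    by_contra hcon
    have : lam * S ≤ 0 := mul_nonpos_of_nonneg_of_nonpos hlam.le (not_lt.1 hcon)
    linarith
  have hθ : 0 < ε * S := mul_pos hε hSpos
  have hθ2 : 2 * (ε * S) ≤ S := by nlinarith
  obtain ⟨f, hfp, hf1, hf2⟩ := thr_fwd (fun i => ((w i).card : ℝ)) p (ε * S) hθ (by linarith)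
  obtain ⟨h, hhp, hh1, hh2⟩ := thr_bwd (fun i => ((w i).card : ℝ)) p (ε * S) hθ (by linarith)
  have hfh : f ≤ h := by
    by_contra hcon
    have h1 : ∑ i ∈ Finset.range (h + 1), ((w i).card : ℝ) ≤
        ∑ i ∈ Finset.range f, ((w i).card : ℝ) :=
      Finset.sum_le_sum_of_subset_of_nonneg (Finset.range_subset_range.2 (by omega))
        (fun _ _ _ => Nat.cast_nonneg _)
    have h2 : S = ∑ i ∈ Finset.range (h + 1), ((w i).card : ℝ) +
        ∑ i ∈ Finset.Ico (h + 1) p, ((w i).card : ℝ) := by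
      rw [hS, Finset.sum_range_add_sum_Ico _ (by omega)]
    linarith
  by_cases hg : ∃ u ∈ (Finset.range (f + 1)).biUnion w, ∃ v ∈ (Finset.Ico h p).biUnion w,
      Good G F ((K + 2 * c + 2 * M * c) * r) u v
  · right
    obtain ⟨u, hu, v, hv, hgood⟩ := hg
    obtain ⟨j, hj, hu⟩ := Finset.mem_biUnion.1 hu
    obtain ⟨e, he, hv⟩ := Finset.mem_biUnion.1 hv
    rw [Finset.mem_range] at hj
    rw [Finset.mem_Ico] at he
    have hje : j ≤ e := by omega
    have hep : e < p := he.2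
    have hub := hball j (by omega) u hu
    have hvb := hball e (by omega) v hv
    have hne := hnext e hep ⟨v, hv⟩
    have hxje := hchG j e hje hep.le
    have hDuv : G.dist u v ≤ G.dist (x j) (x e) + 2 * (c * r) := by
      have := ((hub.symm.trans (Rch.of_reach hxje.reach)).trans hvb).dist_le
      omega
    set L := G.dist (x j) (x e) + (K + 4 * c + 4 * M * c + M) * r with hL
    have hnew : Rch (gr F) L (x j) (x (e + 1)) := by
      have h1 := ((hub.stretch hM).trans hgood).trans (hvb.symm.stretch hM)
      refine (h1.trans (hne.stretch hM)).len ?_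
      rw [hL]
      have : (K + 4 * c + 4 * M * c + M) * r = 2 * (c * r) + (K + 2 * c + 2 * M * c) * r
        + M * (c * r) + M * (c * r) + M * r := by ring
      omega
    refine ⟨fun i => if j < i ∧ i ≤ e then x (e + 1) else x i,
      fun i => if j ≤ i ∧ i ≤ e then ∅ else w i,
      fun i => if i = j then L else if j < i ∧ i ≤ e then 0 else l i, ?_, ?_, ?_, ?_, ?_, ?_, ?_, ?_⟩
    · simp [hx0]
    · have : ¬ (p ≤ e) := by omega
      simp [this, hxp]
    · intro i hi
      rcases lt_trichotomy i j with hij | hij | hij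
      · have a1 : ¬ (j < i ∧ i ≤ e) := by omega
        have a2 : ¬ (j < i + 1 ∧ i + 1 ≤ e) := by omega
        have a3 : ¬ (j ≤ i ∧ i ≤ e) := by omega
        have a4 : i ≠ j := by omega
        simp only [a1, a2, a3, a4, if_false]
        exact hpc i hi
      · subst hij
        have a1 : ¬ (i < i ∧ i ≤ e) := by omega
        have a5 : (if i < i + 1 ∧ i + 1 ≤ e then x (e + 1) else x (i + 1)) = x (e + 1) := by
          split_ifs with hh
          · rfl
          · have : i = e := by omega
            rw [this]
        refine ⟨∅, by simp [SubE], by simp [hje], ?_⟩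
        simp only [a1, a5, if_false, if_true]
        exact hnew.mono (gr_mono Finset.subset_union_left)
      · by_cases hie : i ≤ e
        · have a5 : (if j < i + 1 ∧ i + 1 ≤ e then x (e + 1) else x (i + 1)) = x (e + 1) := by
            split_ifs with hh
            · rfl
            · have : i = e := by omega
              rw [this]
          refine ⟨∅, by simp [SubE], by simp [hij.le, hie], ?_⟩
          simp only [a5, hij, hie, and_self, if_true]
          exact Rch.refl _ _ _
        · have a1 : ¬ (j < i ∧ i ≤ e) := by omega
          have a2 : ¬ (j < i + 1 ∧ i + 1 ≤ e) := by omega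
          have a3 : ¬ (j ≤ i ∧ i ≤ e) := by omega
          have a4 : i ≠ j := by omega
          simp only [a1, a2, a3, a4, if_false]
          exact hpc i hi
    · rw [sum_split3 _ j e p hje hep] at hlen ⊢
      have b1 : ∑ i ∈ Finset.range j, (if i = j then L else if j < i ∧ i ≤ e then 0 else l i) =
          ∑ i ∈ Finset.range j, l i := by
        refine Finset.sum_congr rfl fun i hi => ?_
        rw [Finset.mem_range] at hi
        rw [if_neg (by omega), if_neg (by omega)]
      have b3 : ∑ i ∈ Finset.Ico (e + 1) p, (if i = j then L else if j < i ∧ i ≤ e then 0 else l i) =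
          ∑ i ∈ Finset.Ico (e + 1) p, l i := by
        refine Finset.sum_congr rfl fun i hi => ?_
        rw [Finset.mem_Ico] at hi
        rw [if_neg (by omega), if_neg (by omega)]
      have b2 : ∑ i ∈ Finset.Ico j (e + 1), (if i = j then L else if j < i ∧ i ≤ e then 0 else l i) =
          L := by
        rw [Finset.sum_eq_single j]
        · simp
        · intro i hi hij
          rw [Finset.mem_Ico] at hi
          rw [if_neg hij, if_pos (by omega)]
        · intro hj'
          exact absurd (Finset.mem_Ico.2 (by omega)) hj'
      rw [b1, b2, b3]
      have b4 := hxje.dist_le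
      have b5 : ∑ i ∈ Finset.Ico j e, l i ≤ ∑ i ∈ Finset.Ico j (e + 1), l i :=
        Finset.sum_le_sum_of_subset (Finset.Ico_subset_Ico_right (by omega))
      have b6 : (2 * K + 4 * c + 4 * M * c + M) * r = K * r + (K + 4 * c + 4 * M * c + M) * r := by
        ring
      omega
    · intro i hi v' hv'
      have a3 : ¬ (j ≤ i ∧ i ≤ e) := by
        intro hh; simp [hh] at hv'
      have a1 : ¬ (j < i ∧ i ≤ e) := by omega
      simp only [a3, if_false] at hv'
      simp only [a1, if_false]
      exact hball i hi v' hv'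
    · intro i hi hne'
      have a3 : ¬ (j ≤ i ∧ i ≤ e) := by
        intro hh; simp [hh] at hne'
      have a1 : ¬ (j < i ∧ i ≤ e) := by omega
      have a2 : ¬ (j < i + 1 ∧ i + 1 ≤ e) := by omega
      simp only [a3, if_false] at hne'
      simp only [a1, a2, if_false]
      exact hnext i hi hne'
    · intro v'
      refine (Finset.card_le_card ?_).trans (hmult v')
      intro i hi
      rw [Finset.mem_filter] at hi ⊢
      refine ⟨hi.1, ?_⟩
      have := hi.2
      simp only at this
      split_ifs at this
      · simp at this
      · exact this
    · rw [sum_split3 _ j e p hje hep]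
      have b1 : ∑ i ∈ Finset.range j, (((if j ≤ i ∧ i ≤ e then ∅ else w i : Finset V)).card : ℝ) ≤
          ∑ i ∈ Finset.range f, ((w i).card : ℝ) := by
        refine le_trans (le_of_eq ?_) (Finset.sum_le_sum_of_subset_of_nonneg
          (Finset.range_subset_range.2 (show j ≤ f by omega)) (fun _ _ _ => Nat.cast_nonneg _))
        refine Finset.sum_congr rfl fun i hi => ?_
        rw [Finset.mem_range] at hi
        rw [if_neg (by omega)]
      have b3 : ∑ i ∈ Finset.Ico (e + 1) p,
          (((if j ≤ i ∧ i ≤ e then ∅ else w i : Finset V)).card : ℝ) ≤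
          ∑ i ∈ Finset.Ico (h + 1) p, ((w i).card : ℝ) := by
        refine le_trans (le_of_eq ?_) (Finset.sum_le_sum_of_subset_of_nonneg
          (Finset.Ico_subset_Ico_left (show h + 1 ≤ e + 1 by omega))
          (fun _ _ _ => Nat.cast_nonneg _))
        refine Finset.sum_congr rfl fun i hi => ?_
        rw [Finset.mem_Ico] at hi
        rw [if_neg (by omega)]
      have b2 : ∑ i ∈ Finset.Ico j (e + 1),
          (((if j ≤ i ∧ i ≤ e then ∅ else w i : Finset V)).card : ℝ) = 0 := by
        refine Finset.sum_eq_zero fun i hi => ?_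
        rw [Finset.mem_Ico] at hi
        rw [if_pos (by omega)]
        simp
      have b4 : ε * S ≤ ε * Sb := mul_le_mul_of_nonneg_left hSb hε.le
      linarith
  · left
    refine ⟨F ∪ EE, S, (Finset.range (f + 1)).biUnion w, (Finset.Ico h p).biUnion w,
      Finset.subset_union_left, hF'sub, ?_, hdone, ?_, ?_, ?_⟩
    · have : ((F ∪ EE).card : ℝ) ≤ F.card + EE.card := by exact_mod_cast Finset.card_union_le _ _
      linarith
    · refine hf2.trans ?_
      exact_mod_cast double_count w p m _ (Finset.range_subset_range.2 (by omega)) hmult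
    · refine hh2.trans ?_
      refine le_trans (le_of_eq ?_) (Nat.cast_le.2 (double_count w p m (Finset.Ico h p) ?_ hmult)
        |>.trans (le_of_eq ?_))
      · push_cast; rfl
      · intro i hi
        rw [Finset.mem_Ico] at hi
        exact Finset.mem_range.2 hi.2
      · push_cast; rfl
    · intro u hu v hv
      refine ⟨fun hgood => hg ⟨u, hu, v, hv, hgood⟩, ?_⟩
      obtain ⟨j, hj, hu⟩ := Finset.mem_biUnion.1 hu
      obtain ⟨e, he, hv⟩ := Finset.mem_biUnion.1 hv
      rw [Finset.mem_range] at hj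
      rw [Finset.mem_Ico] at he
      have hje : j ≤ e := by omega
      have hep : e < p := he.2
      have hub := hball j (by omega) u hu
      have hvb := hball e (by omega) v hv
      have hM' : ∀ u v, G.Adj u v → Rch (gr (F ∪ EE)) M u v :=
        fun u v h => (hM u v h).mono (gr_mono Finset.subset_union_left)
      have c1 := hchG 0 j (by omega) (by omega)
      have c2 := hchG j e hje hep.le
      have c3 := hchG e p hep.le le_rfl
      rw [hx0] at c1
      rw [hxp] at c3
      have hsum : ∑ i ∈ Finset.Ico 0 j, l i + ∑ i ∈ Finset.Ico j e, l i + ∑ i ∈ Finset.Ico e p, l i =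
          ∑ i ∈ Finset.range p, l i := by
        rw [Finset.range_eq_Ico, Finset.sum_Ico_consecutive _ (by omega) (by omega),
          Finset.sum_Ico_consecutive _ (by omega) (by omega)]
      have d1 := ((c1.trans (Rch.of_reach c2.reach)).trans c3).dist_le
      have d2 := ((hub.trans (Rch.of_reach
        ((hub.symm.trans c2).trans hvb).reach)).trans hvb.symm).dist_le
      have hc2r : 2 * c * r = c * r + c * r := by ring
      refine ⟨?_, ?_, ?_⟩
      · have := ((hub.symm.stretch hM').trans (hch j e hje hep.le)).trans (hvb.stretch hM')
        refine this.len ?_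
        have : (K + 2 * c + 2 * M * c) * r = K * r + 2 * (c * r) + 2 * (M * (c * r)) := by ring
        omega
      · exact (c1.trans hub).len (by omega)
      · exact ((hub.symm.trans c2).trans hvb).len (by omega)

end SAS


namespace SAS

theorem finish_state {V : Type} [Fintype V] [DecidableEq V] {G : SimpleGraph V}
    {F : Finset (Sym2 V)} {r c p K m : ℕ} {lam Sb : ℝ} {s t : V}
    (hst : St G F lam c r p s t K m Sb) (hSb1 : Sb < 1) :
    ∃ E : Finset (Sym2 V), SubE G E ∧ (E.card : ℝ) ≤ 0 ∧
      Rch (gr (F ∪ E)) (G.dist s t + K * r) s t := by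
  obtain ⟨x, w, l, hx0, hxp, hpc, hlen, -, -, -, hSb⟩ := hst
  have hz : ∑ i ∈ Finset.range p, (w i).card = 0 := by
    have : ((∑ i ∈ Finset.range p, (w i).card : ℕ) : ℝ) < 1 := by
      push_cast
      linarith
    have : (∑ i ∈ Finset.range p, (w i).card) < 1 := by exact_mod_cast this
    omega
  refine ⟨∅, by simp [SubE], by simp, ?_⟩
  have := chain (K := gr (F ∪ ∅)) x l 0 p (by omega) (by
    intro i _ hi
    obtain ⟨E, -, hc, hr⟩ := hpc i hi
    have h0 : (w i).card = 0 := Finset.sum_eq_zero_iff.1 hz i (Finset.mem_range.2 hi)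
    rw [h0] at hc
    have hE : E = ∅ := by
      rw [← Finset.card_eq_zero]
      have : (E.card : ℝ) ≤ 0 := by simpa using hc
      exact_mod_cast le_antisymm this (Nat.cast_nonneg _)
    rwa [hE] at hr)
  rw [hx0, hxp, ← Finset.range_eq_Ico] at this
  exact this.len hlen

/-- Error constants along the shortcutting procedure. -/
def kap (α c M : ℕ) : ℕ → ℕ
  | 0 => α
  | q + 1 => 2 * kap α c M q + 4 * c + 4 * M * c + M

theorem kap_mono (α c M : ℕ) : Monotone (kap α c M) := by
  refine monotone_nat_of_le_succ fun q => ?_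
  rw [kap]
  omega

open Classical in
/-- One summand of the potential. -/
noncomputable def phi {V : Type} [Fintype V] (G : SimpleGraph V) (ρ : ℝ) (d : ℕ) (g : ℕ)
    (F : Finset (Sym2 V)) (u : V) : ℝ :=
  ∑ v ∈ ball G d u, if Good G F g u v then ρ / (ball G d u).card else 0

/-- The potential. -/
noncomputable def Phi {V : Type} [Fintype V] (G : SimpleGraph V) (ρ : ℝ) (d : ℕ) (g : ℕ → ℕ)
    (Q : ℕ) (F : Finset (Sym2 V)) : ℝ :=
  ∑ q ∈ Finset.range Q, ∑ u : V, phi G ρ d (g q) F u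

section pot
variable {V : Type} [Fintype V] {G : SimpleGraph V} {ρ : ℝ} {d : ℕ}

theorem Good.mono {V : Type} {G : SimpleGraph V} {F F' : Finset (Sym2 V)} {g : ℕ} {u v : V} (h : Good G F g u v) (hF : F ⊆ F') :
    Good G F' g u v := Rch.mono h (gr_mono hF)

theorem self_mem_ball (u : V) : u ∈ ball G d u := mem_ball.2 (Rch.refl _ _ _)

theorem ball_card_pos (u : V) : (0 : ℝ) < (ball G d u).card := by
  exact_mod_cast Finset.card_pos.2 ⟨u, self_mem_ball u⟩

theorem phi_le (hρ : 0 ≤ ρ) (g : ℕ) (F : Finset (Sym2 V)) (u : V) : phi G ρ d g F u ≤ ρ := by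
  classical
  have hb := ball_card_pos (G := G) (d := d) u
  calc phi G ρ d g F u ≤ ∑ v ∈ ball G d u, ρ / (ball G d u).card := by
        refine Finset.sum_le_sum fun v _ => ?_
        split_ifs
        · exact le_rfl
        · positivity
    _ = ρ := by
        rw [Finset.sum_const, nsmul_eq_mul]
        field_simp

theorem Phi_le (hρ : 0 ≤ ρ) (g : ℕ → ℕ) (Q : ℕ) (F : Finset (Sym2 V)) :
    Phi G ρ d g Q F ≤ Q * (Fintype.card V * ρ) := by
  calc Phi G ρ d g Q F ≤ ∑ q ∈ Finset.range Q, ∑ u : V, ρ :=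
        Finset.sum_le_sum fun q _ => Finset.sum_le_sum fun u _ => phi_le hρ _ _ _
    _ = Q * (Fintype.card V * ρ) := by simp [nsmul_eq_mul]

theorem phi_mono (hρ : 0 ≤ ρ) {F F' : Finset (Sym2 V)} (hF : F ⊆ F') (g : ℕ) (u : V) :
    phi G ρ d g F u ≤ phi G ρ d g F' u := by
  classical
  refine Finset.sum_le_sum fun v _ => ?_
  by_cases h : Good G F g u v
  · rw [if_pos h, if_pos (h.mono hF)]
  · rw [if_neg h]
    split_ifs
    · positivity
    · exact le_rfl

theorem phi_gain [DecidableEq V] (hρ : 0 ≤ ρ) {F F' : Finset (Sym2 V)} (hF : F ⊆ F') (g : ℕ) (u : V)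
    (B : Finset V) (hB : B ⊆ ball G d u) (hg : ∀ v ∈ B, ¬ Good G F g u v ∧ Good G F' g u v) :
    phi G ρ d g F u + B.card * (ρ / (ball G d u).card) ≤ phi G ρ d g F' u := by
  classical
  have h1 : (B.card : ℝ) * (ρ / (ball G d u).card) =
      ∑ v ∈ ball G d u, if v ∈ B then ρ / (ball G d u).card else 0 := by
    rw [← Finset.sum_filter, Finset.filter_mem_eq_inter, Finset.inter_eq_right.2 hB,
      Finset.sum_const, nsmul_eq_mul]
  rw [h1, phi, phi, ← Finset.sum_add_distrib]
  refine Finset.sum_le_sum fun v _ => ?_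
  by_cases hv : v ∈ B
  · rw [if_pos hv, if_neg (hg v hv).1, if_pos (hg v hv).2, zero_add]
  · rw [if_neg hv, add_zero]
    by_cases h : Good G F g u v
    · rw [if_pos h, if_pos (h.mono hF)]
    · rw [if_neg h]
      split_ifs
      · positivity
      · exact le_rfl

theorem Phi_gain [DecidableEq V] (hρ : 0 ≤ ρ) {F F' : Finset (Sym2 V)} (hF : F ⊆ F') (g : ℕ → ℕ)
    (Q q : ℕ) (hq : q < Q) (A B : Finset V) (β : ℝ)
    (hA : ∀ u ∈ A, B ⊆ ball G d u ∧ ((ball G d u).card : ℝ) ≤ β)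
    (hg : ∀ u ∈ A, ∀ v ∈ B, ¬ Good G F (g q) u v ∧ Good G F' (g q) u v) :
    Phi G ρ d g Q F + A.card * (B.card * (ρ / β)) ≤ Phi G ρ d g Q F' := by
  have h1 : (A.card : ℝ) * (B.card * (ρ / β)) =
      ∑ q' ∈ Finset.range Q, ∑ u : V, if q' = q ∧ u ∈ A then B.card * (ρ / β) else 0 := by
    rw [Finset.sum_eq_single q]
    · simp only [true_and]
      rw [← Finset.sum_filter, Finset.filter_mem_eq_inter, Finset.univ_inter, Finset.sum_const,
        nsmul_eq_mul]
    · intro b _ hb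
      simp [hb]
    · intro h
      exact absurd (Finset.mem_range.2 hq) h
  rw [h1, Phi, Phi, ← Finset.sum_add_distrib]
  refine Finset.sum_le_sum fun q' _ => ?_
  rw [← Finset.sum_add_distrib]
  refine Finset.sum_le_sum fun u _ => ?_
  by_cases h : q' = q ∧ u ∈ A
  · rw [if_pos h]
    obtain ⟨rfl, hu⟩ := h
    refine le_trans ?_ (phi_gain hρ hF (g q') u B (hA u hu).1 (hg u hu))
    have hb := ball_card_pos (G := G) (d := d) u
    have := (hA u hu).2
    gcongr
  · rw [if_neg h, add_zero]
    exact phi_mono hρ hF _ _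

end pot

theorem step {V : Type} [Fintype V] [DecidableEq V] {G : SimpleGraph V}
    {F0 : Finset (Sym2 V)} {r E c R α M Q : ℕ} {lam lam' z : ℝ}
    (hP : Pr G F0 r E lam c) (hr : 0 < r) (hR : 0 < R) (hRE : R * E ≤ α * r)
    (hlam : 0 < lam) (hlam' : 0 < lam') (hz : 1 ≤ z) (hQ : 0 < Q)
    (hzQ : (Fintype.card V : ℝ) ≤ z ^ Q)
    (hM : ∀ u v, G.Adj u v → Rch (gr F0) M u v) (hF0 : SubE G F0) :
    ∃ F : Finset (Sym2 V), F0 ⊆ F ∧ SubE G F ∧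
      (F.card : ℝ) ≤ F0.card + Q * (Fintype.card V *
        ((lam * (2 * c + 1 : ℕ) * (2 * ((2 * c + 1 : ℕ) + 1) * z)) ^ 2 / lam')) ∧
      Pr G F (R * r) (kap α c M Q * r) lam' (2 + 2 * kap α c M Q + 3 * c) := by
  classical
  set m : ℕ := 2 * c + 1 with hm
  set n : ℝ := (Fintype.card V : ℝ) with hn
  set ρ : ℝ := (lam * m * (2 * (m + 1) * z)) ^ 2 / lam' with hρdef
  have hmpos : (1 : ℝ) ≤ m := by
    rw [hm]; exact_mod_cast Nat.le_add_left 1 (2 * c)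
  have hρ : 0 ≤ ρ := by positivity
  set ε : ℝ := 1 / (2 * (m + 1) * z) with hεdef
  have hden : 4 ≤ 2 * ((m : ℝ) + 1) * z := by nlinarith
  have hε : 0 < ε := by positivity
  have hε' : ε ≤ 1 / 4 := one_div_le_one_div_of_le (by norm_num) hden
  set KQ := kap α c M Q with hKQ
  set d : ℕ := (1 + KQ + 2 * c) * (R * r) with hd
  set g : ℕ → ℕ := fun q => (kap α c M q + 2 * c + 2 * M * c) * r with hg
  set 𝒮 : Finset (Finset (Sym2 V)) := Finset.univ.filter (fun F =>
    F0 ⊆ F ∧ SubE G F ∧ (F.card : ℝ) ≤ F0.card + Phi G ρ d g Q F) with h𝒮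
  have hPhi0 : ∀ F, 0 ≤ Phi G ρ d g Q F := by
    intro F
    refine Finset.sum_nonneg fun q _ => Finset.sum_nonneg fun u _ => Finset.sum_nonneg fun v _ => ?_
    split_ifs
    · positivity
    · exact le_rfl
  have hne : 𝒮.Nonempty := ⟨F0, by
    rw [h𝒮, Finset.mem_filter]
    exact ⟨Finset.mem_univ _, Finset.Subset.refl _, hF0, by linarith [hPhi0 F0]⟩⟩
  obtain ⟨F, hF, hmax⟩ := Finset.exists_max_image 𝒮 Finset.card hne
  obtain ⟨-, hF0F, hFG, hFc⟩ := Finset.mem_filter.1 hF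
  refine ⟨F, hF0F, hFG, hFc.trans (by linarith [Phi_le (G := G) (d := d) hρ g Q F]), ?_⟩
  intro s t hst
  have hMF : ∀ u v, G.Adj u v → Rch (gr F) M u v :=
    fun u v h => (hM u v h).mono (gr_mono hF0F)
  have hPF : Pr G F r E lam c := by
    intro s t h
    obtain ⟨E', h1, h2, h3⟩ := hP s t h
    exact ⟨E', h1, h2, h3.mono (gr_mono (Finset.union_subset_union_left hF0F))⟩
  set dd := (2 + 2 * KQ + 3 * c) * (R * r) with hdd
  set β : ℝ := ((ball G dd s).card : ℝ) with hβ
  have hβpos : 0 < β := ball_card_pos s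
  have hrR : r ≤ R * r := Nat.le_mul_of_pos_left _ hR
  have main : ∀ q, q ≤ Q →
      (∃ E : Finset (Sym2 V), SubE G E ∧ (E.card : ℝ) ≤ lam' * β ∧
        Rch (gr (F ∪ E)) (G.dist s t + KQ * r) s t) ∨
      St G F lam c r R s t (kap α c M q) m ((2 * ε) ^ q * (m * n)) := by
    intro q
    induction q with
    | zero =>
      intro _
      right
      have := init_state hPF hr hRE hst
      rw [pow_zero, one_mul]
      exact this
    | succ q ih =>
      intro hq
      rcases ih (by omega) with h | h
      · exact Or.inl h
      have hkq : kap α c M q ≤ KQ := kap_mono α c M (by omega)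
      rcases advance (Y := lam' * β) hlam (by positivity) hε hε' hMF hFG h with h | h | h
      · left
        obtain ⟨E, h1, h2, h3⟩ := h
        exact ⟨E, h1, h2, h3.len (Nat.add_le_add_left (Nat.mul_le_mul_right _ hkq) _)⟩
      · exfalso
        obtain ⟨F', S, A, B, hFF', hF'G, hF'c, hYS, hA, hB, hAB⟩ := h
        have hSpos : 0 < S := by
          by_contra hcon
          have h1 : lam * S ≤ 0 := mul_nonpos_of_nonneg_of_nonpos hlam.le (not_lt.1 hcon)
          have h2 : 0 < lam' * β := by positivity
          linarith
        have hεS : 0 < ε * S := by positivity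
        have hAne : A.Nonempty := by
          rw [← Finset.card_pos]
          by_contra hcon
          have : A.card = 0 := by omega
          rw [this] at hA
          simp at hA
          linarith
        have hBne : B.Nonempty := by
          rw [← Finset.card_pos]
          by_contra hcon
          have : B.card = 0 := by omega
          rw [this] at hB
          simp at hB
          linarith
        have hlt : F.card < F'.card := by
          refine Finset.card_lt_card (Finset.ssubset_iff_subset_ne.2 ⟨hFF', ?_⟩)
          rintro rfl
          obtain ⟨u, hu⟩ := hAne
          obtain ⟨v, hv⟩ := hBne
          exact (hAB u hu v hv).1 (hAB u hu v hv).2.1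
        have hDst := hst.dist_le
        have hkr : kap α c M q * r ≤ KQ * (R * r) := Nat.mul_le_mul hkq hrR
        have hcr : c * r ≤ c * (R * r) := Nat.mul_le_mul_left _ hrR
        have hgain := Phi_gain (G := G) (d := d) hρ hFF' g Q q (by omega) A B β (by
          intro u hu
          constructor
          · intro v hv
            refine mem_ball.2 ((hAB u hu v hv).2.2.2.len ?_)
            have e1 : d = R * r + KQ * (R * r) + 2 * (c * (R * r)) := by rw [hd]; ring
            have e2 : 2 * c * r = 2 * (c * r) := by ring
            omega
          · rw [hβ]
            refine Nat.cast_le.2 (Finset.card_le_card ?_)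
            intro v hv
            obtain ⟨v0, hv0⟩ := hBne
            refine mem_ball.2 (((hAB u hu v0 hv0).2.2.1.trans (mem_ball.1 hv)).len ?_)
            have e1 : d = R * r + KQ * (R * r) + 2 * (c * (R * r)) := by rw [hd]; ring
            have e2 : dd = 2 * (R * r) + 2 * (KQ * (R * r)) + 3 * (c * (R * r)) := by
              rw [hdd]; ring
            omega)
          (fun u hu v hv => ⟨(hAB u hu v hv).1, (hAB u hu v hv).2.1⟩)
        have hcost : lam * S ≤ A.card * (B.card * (ρ / β)) := by
          have h1 : (ε * S) ^ 2 ≤ m ^ 2 * (A.card * B.card) := by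
            calc (ε * S) ^ 2 = (ε * S) * (ε * S) := by ring
              _ ≤ (m * A.card) * (m * B.card) := by gcongr
              _ = _ := by ring
          have h2 : S ^ 2 ≤ (m * (2 * (m + 1) * z)) ^ 2 * (A.card * B.card) := by
            have h3 : S = (ε * S) * (2 * (m + 1) * z) := by
              rw [hεdef]
              field_simp
            calc S ^ 2 = (ε * S) ^ 2 * (2 * (m + 1) * z) ^ 2 := by
                  rw [← mul_pow, ← h3]
              _ ≤ (m ^ 2 * (A.card * B.card)) * (2 * (m + 1) * z) ^ 2 := by gcongr
              _ = _ := by ring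
          have h4 : (A.card : ℝ) * (B.card * (ρ / β)) =
              lam ^ 2 * ((m * (2 * (m + 1) * z)) ^ 2 * (A.card * B.card)) / (lam' * β) := by
            rw [hρdef]
            field_simp
          rw [h4, le_div_iff₀ (by positivity)]
          calc lam * S * (lam' * β) ≤ lam * S * (lam * S) := by gcongr
            _ = lam ^ 2 * S ^ 2 := by ring
            _ ≤ _ := by gcongr
        have hin : F' ∈ 𝒮 := by
          rw [h𝒮, Finset.mem_filter]
          exact ⟨Finset.mem_univ _, hF0F.trans hFF', hF'G, by linarith⟩
        have := hmax F' hin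
        omega
      · right
        have e : (2 * ε) ^ (q + 1) * (m * n) = 2 * ε * ((2 * ε) ^ q * (m * n)) := by ring
        rw [e]
        exact h
  rcases main Q le_rfl with h | h
  · exact h
  · obtain ⟨E', h1, h2, h3⟩ := finish_state h (by
      have e1 : 2 * ε = 1 / ((m + 1) * z) := by
        rw [hεdef]; field_simp
      have e2 : (m : ℝ) < (m + 1) ^ Q := by
        calc (m : ℝ) < m + 1 := by linarith
          _ = (m + 1) ^ 1 := by ring
          _ ≤ (m + 1) ^ Q := pow_le_pow_right₀ (by linarith) hQ
      have hzQ' : 0 < z ^ Q := by positivity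
      rw [e1, div_pow, one_pow, mul_pow, div_mul_eq_mul_div, div_lt_one (by positivity), one_mul]
      calc (m : ℝ) * n ≤ m * z ^ Q := by gcongr
        _ < _ := by gcongr)
    exact ⟨E', h1, h2.trans (by positivity), h3⟩

end SAS


namespace SAS

theorem rch_one {V : Type} {G : SimpleGraph V} {s t : V} (h : Rch G 1 s t) : s = t ∨ G.Adj s t := by
  obtain ⟨W, hW⟩ := h
  cases W with
  | nil => exact Or.inl rfl
  | cons h p =>
    right
    rw [SimpleGraph.Walk.length_cons] at hW
    have hp : p.length = 0 := by omega
    have := SimpleGraph.Walk.eq_of_length_eq_zero hp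
    rwa [← this]

theorem base_level {V : Type} [Fintype V] [DecidableEq V] (G : SimpleGraph V) (y z : ℝ) (Q : ℕ)
    (hQ : 0 < Q) (hy : 1 ≤ y) (hz : 1 ≤ z) (hzQ : (Fintype.card V : ℝ) ≤ z ^ Q) :
    ∃ F : Finset (Sym2 V), SubE G F ∧ (∀ u v, G.Adj u v → Rch (gr F) (2 * Q) u v) ∧
      (F.card : ℝ) ≤ 2 * (Fintype.card V * (y * z ^ 2)) ∧ Pr G F 1 0 y⁻¹ 1 := by
  classical
  obtain ⟨T, hT, hTc, hTr⟩ := mult_spanner G z Q hQ hz hzQ Finset.univ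
  set nb : V → Finset V := fun v => Finset.univ.filter (fun u => G.Adj v u) with hnb
  set Lo := (Finset.univ.filter (fun v => ((nb v).card : ℝ) < y)).biUnion
    (fun v => (nb v).image (fun u => s(v, u))) with hLo
  have hLosub : SubE G Lo := by
    intro e he
    obtain ⟨v, -, he⟩ := Finset.mem_biUnion.1 he
    obtain ⟨u, hu, rfl⟩ := Finset.mem_image.1 he
    exact (SimpleGraph.mem_edgeSet G).2 (Finset.mem_filter.1 hu).2
  have hLoc : (Lo.card : ℝ) ≤ Fintype.card V * y := by
    have h1 : (Lo.card : ℝ) ≤ ∑ v ∈ Finset.univ.filter (fun v => ((nb v).card : ℝ) < y),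
        (((nb v).image (fun u => s(v, u))).card : ℝ) := by
      exact_mod_cast Finset.card_biUnion_le
    refine h1.trans ?_
    calc _ ≤ ∑ v ∈ Finset.univ.filter (fun v => ((nb v).card : ℝ) < y), y := by
          refine Finset.sum_le_sum fun v hv => ?_
          refine le_trans ?_ (Finset.mem_filter.1 hv).2.le
          exact_mod_cast Finset.card_image_le
      _ ≤ ∑ v : V, y := Finset.sum_le_sum_of_subset_of_nonneg (Finset.filter_subset _ _)
          (fun _ _ _ => by linarith)
      _ = _ := by simp
  refine ⟨T ∪ Lo, hT.union hLosub, ?_, ?_, ?_⟩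
  · intro u v h
    exact (hTr u (Finset.mem_univ _) v (Finset.mem_univ _) h).mono (gr_mono Finset.subset_union_left)
  · have h1 : ((T ∪ Lo).card : ℝ) ≤ T.card + Lo.card := by exact_mod_cast Finset.card_union_le _ _
    rw [Finset.card_univ] at hTc
    have h2 : z ≤ y * z ^ 2 := by nlinarith [mul_nonneg (sub_nonneg.2 hy) (sq_nonneg z)]
    have h3 : y ≤ y * z ^ 2 := le_mul_of_one_le_right (by linarith) (one_le_pow₀ hz)
    have hn : (0 : ℝ) ≤ Fintype.card V := Nat.cast_nonneg _
    have h4 := mul_le_mul_of_nonneg_left h2 hn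
    have h5 := mul_le_mul_of_nonneg_left h3 hn
    linarith
  · intro s t hst
    have hyinv : 0 ≤ y⁻¹ := by positivity
    rcases rch_one hst with rfl | hadj
    · exact ⟨∅, by simp [SubE], by simp; positivity, Rch.refl _ _ _⟩
    have hd : G.dist s t = 1 := SimpleGraph.dist_eq_one_iff_adj.2 hadj
    by_cases hlo : ((nb s).card : ℝ) < y
    · refine ⟨∅, by simp [SubE], by simp; positivity, ?_⟩
      rw [hd]
      refine (Rch.of_adj (gr_adj ?_ hadj.ne)).len (by omega)
      rw [Finset.union_empty]
      refine Finset.mem_union_right _ (Finset.mem_biUnion.2 ⟨s, ?_, ?_⟩)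
      · exact Finset.mem_filter.2 ⟨Finset.mem_univ _, hlo⟩
      · exact Finset.mem_image.2 ⟨t, Finset.mem_filter.2 ⟨Finset.mem_univ _, hadj⟩, rfl⟩
    · refine ⟨{s(s, t)}, ?_, ?_, ?_⟩
      · intro e he
        rw [Finset.mem_singleton] at he
        rw [he]
        exact (SimpleGraph.mem_edgeSet G).2 hadj
      · have h1 : ((nb s).card : ℝ) ≤ (ball G (1 * 1) s).card := by
          refine Nat.cast_le.2 (Finset.card_le_card fun u hu => ?_)
          exact mem_ball.2 (Rch.of_adj (Finset.mem_filter.1 hu).2)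
        have h2 : y ≤ (ball G (1 * 1) s).card := (not_lt.1 hlo).trans h1
        rw [Finset.card_singleton, inv_mul_eq_div, le_div_iff₀ (by linarith)]
        simpa using h2
      · rw [hd]
        refine (Rch.of_adj (gr_adj ?_ hadj.ne)).len (by omega)
        exact Finset.mem_union_right _ (Finset.mem_singleton_self _)

theorem levels (Q : ℕ) (hQ : 0 < Q) (i : ℕ) : ∃ (α c : ℕ) (C : ℝ), 0 ≤ C ∧
    ∀ (V : Type) [Fintype V] [DecidableEq V] (G : SimpleGraph V) (y z : ℝ) (R : ℕ),
      1 ≤ y → 1 ≤ z → (Fintype.card V : ℝ) ≤ z ^ Q → 0 < R →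
      ∃ F : Finset (Sym2 V), SubE G F ∧ (∀ u v, G.Adj u v → Rch (gr F) (2 * Q) u v) ∧
        (F.card : ℝ) ≤ C * (Fintype.card V * (y * z ^ 2)) ∧
        ∃ E : ℕ, R * E ≤ α * R ^ i ∧ Pr G F (R ^ i) E (y ^ (2 ^ (i + 1) - 1))⁻¹ c := by
  induction i with
  | zero =>
    refine ⟨0, 1, 2, by norm_num, ?_⟩
    intro V _ _ G y z R hy hz hzQ hR
    obtain ⟨F, h1, h2, h3, h4⟩ := base_level G y z Q hQ hy hz hzQ
    exact ⟨F, h1, h2, h3, 0, by simp, by simpa using h4⟩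
  | succ i ih =>
    obtain ⟨α, c, C, hC, ih⟩ := ih
    refine ⟨kap α c (2 * Q) Q, 2 + 2 * kap α c (2 * Q) Q + 3 * c,
      C + Q * ((2 * c + 1 : ℕ) * (2 * ((2 * c + 1 : ℕ) + 1))) ^ 2, by positivity, ?_⟩
    intro V _ _ G y z R hy hz hzQ hR
    obtain ⟨F0, h1, h2, h3, E, hE, hP⟩ := ih V G y z R hy hz hzQ hR
    have hy0 : 0 < y := by linarith
    obtain ⟨F, g1, g2, g3, g4⟩ := step (lam' := (y ^ (2 ^ (i + 1 + 1) - 1))⁻¹) hP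
      (Nat.pow_pos hR) hR hE (by positivity) (by positivity) hz hQ hzQ h2 h1
    refine ⟨F, g2, fun u v h => (h2 u v h).mono (gr_mono g1), ?_, kap α c (2 * Q) Q * R ^ i, ?_, ?_⟩
    · refine g3.trans ?_
      have hexp : 2 ^ (i + 1 + 1) - 1 = 2 * (2 ^ (i + 1) - 1) + 1 := by
        have : 1 ≤ 2 ^ (i + 1) := Nat.one_le_two_pow
        rw [pow_succ 2 (i + 1)]
        omega
      have key : ∀ a b : ℝ, ((y ^ (2 ^ (i + 1) - 1))⁻¹ * a * (b * z)) ^ 2 /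
          (y ^ (2 ^ (i + 1 + 1) - 1))⁻¹ = (a * b) ^ 2 * (y * z ^ 2) := by
        intro a b
        have e : y ^ (2 ^ (i + 1 + 1) - 1) = (y ^ (2 ^ (i + 1) - 1)) ^ 2 * y := by
          rw [hexp, pow_succ, mul_comm 2, pow_mul]
        have hY : y ^ (2 ^ (i + 1) - 1) ≠ 0 := by positivity
        rw [e, div_inv_eq_mul]
        generalize y ^ (2 ^ (i + 1) - 1) = Y at hY
        field_simp
      rw [key]
      rw [add_mul]
      refine add_le_add h3 (le_of_eq ?_)
      ring
    · rw [pow_succ]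
      exact le_of_eq (by ring)
    · rw [pow_succ, mul_comm (R ^ i) R]
      exact g4

theorem scale_exists (k n D : ℕ) (hk : 2 ≤ k) (hD : 1 ≤ D) (hDn : D ≤ n) :
    ∃ j, j < Nat.log 2 n + 2 ∧ D ≤ (2 ^ j) ^ k ∧
      (((2 ^ j : ℕ) : ℝ)) ^ (k - 1) ≤ 2 ^ k * (D : ℝ) ^ ((1 : ℝ) - 1 / k) := by
  have hlt : n < 2 ^ (Nat.log 2 n + 1) := Nat.lt_pow_succ_log_self (by norm_num) n
  have hex : D ≤ (2 ^ (Nat.log 2 n + 1)) ^ k :=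
    hDn.trans (hlt.le.trans (Nat.le_self_pow (by omega) _))
  have hex' : ∃ j, D ≤ (2 ^ j) ^ k := ⟨_, hex⟩
  have hD1 : (1 : ℝ) ≤ D := by exact_mod_cast hD
  have hk2 : (2 : ℝ) ≤ k := by exact_mod_cast hk
  have he : (0 : ℝ) ≤ 1 - 1 / (k : ℝ) := by
    rw [sub_nonneg, div_le_one (by linarith)]
    linarith
  have hDp : 1 ≤ (D : ℝ) ^ ((1 : ℝ) - 1 / k) := Real.one_le_rpow hD1 he
  classical
  refine ⟨Nat.find hex', ?_, Nat.find_spec hex', ?_⟩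
  · have := Nat.find_min' hex' hex
    omega
  · rcases hj : Nat.find hex' with _ | j
    · simp only [pow_zero, Nat.cast_one, one_pow]
      have : (1 : ℝ) ≤ 2 ^ k := one_le_pow₀ (by norm_num)
      nlinarith
    · have hmin : ¬ D ≤ (2 ^ j) ^ k := Nat.find_min hex' (by omega)
      have h1 : ((2 : ℝ) ^ j) ^ k ≤ D := by
        have : (2 ^ j) ^ k ≤ D := by omega
        exact_mod_cast this
      have h2 : ((2 : ℝ) ^ j) ^ (k - 1) ≤ (D : ℝ) ^ ((1 : ℝ) - 1 / k) := by
        have h3 : ((2 : ℝ) ^ j) ^ (k - 1) = (((2 : ℝ) ^ j) ^ k) ^ ((1 : ℝ) - 1 / k) := by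
          rw [← Real.rpow_natCast _ (k - 1), ← Real.rpow_natCast _ k, ← Real.rpow_mul (by positivity)]
          congr 1
          rw [Nat.cast_sub (by omega)]
          field_simp
          simp
        rw [h3]
        exact Real.rpow_le_rpow (by positivity) h1 he
      push_cast
      rw [pow_succ, mul_pow, mul_comm]
      have h4 : (2 : ℝ) ^ (k - 1) ≤ 2 ^ k := pow_le_pow_right₀ (by norm_num) (by omega)
      gcongr

theorem log_bound (γ : ℝ) (hγ : 0 < γ) : ∃ C : ℝ, 0 < C ∧ ∀ n : ℕ, 1 ≤ n →
    ((Nat.log 2 n + 2 : ℕ) : ℝ) ≤ C * (n : ℝ) ^ γ := by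
  have hl2 : 0 < Real.log 2 := Real.log_pos (by norm_num)
  refine ⟨1 / (γ * Real.log 2) + 2, by positivity, ?_⟩
  intro n hn
  have hn1 : (1 : ℝ) ≤ n := by exact_mod_cast hn
  have h1 : (1 : ℝ) ≤ (n : ℝ) ^ γ := Real.one_le_rpow hn1 hγ.le
  have h2 : (Nat.log 2 n : ℝ) * Real.log 2 ≤ Real.log n := by
    rw [← Real.log_pow]
    refine Real.log_le_log (by positivity) ?_
    exact_mod_cast Nat.pow_log_le_self 2 (by omega)
  have h3 : Real.log n ≤ (n : ℝ) ^ γ / γ := Real.log_le_rpow_div (by linarith) hγ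
  have h4 : (Nat.log 2 n : ℝ) ≤ 1 / (γ * Real.log 2) * (n : ℝ) ^ γ := by
    have : (Nat.log 2 n : ℝ) ≤ ((n : ℝ) ^ γ / γ) / Real.log 2 := by
      rw [le_div_iff₀ hl2]; linarith
    refine this.trans (le_of_eq ?_)
    field_simp
  push_cast
  rw [add_mul]
  linarith

end SAS

theorem sublinear_additive_spanner (δ : ℝ) (hδ : 0 < δ) (k : ℕ) (hk : 2 ≤ k) :
    ∃ C : ℝ, 0 < C ∧
      ∀ (V : Type) [Fintype V] (G : SimpleGraph V),
        ∃ H : SimpleGraph V, H ≤ G ∧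
          (H.edgeSet.ncard : ℝ) ≤
            C * (Fintype.card V : ℝ) ^ ((1 : ℝ) + (1 + δ) / (2 ^ (k + 1) - 1)) ∧
          ∀ u v : V, G.Reachable u v →
            H.Reachable u v ∧
            (H.dist u v : ℝ) ≤ (G.dist u v : ℝ) +
              C * (G.dist u v : ℝ) ^ ((1 : ℝ) - 1 / (k : ℝ)) := by
  classical
  set N : ℕ := 2 ^ (k + 1) - 1 with hN
  have hpow1 : 1 < 2 ^ (k + 1) := Nat.one_lt_two_pow (by omega)
  have hNR : ((2 : ℝ) ^ (k + 1) - 1) = N := by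
    rw [hN, Nat.cast_sub hpow1.le]
    push_cast
    ring
  have hNpos : (0 : ℝ) < N := by
    have : 0 < N := by omega
    exact_mod_cast this
  rw [hNR]
  obtain ⟨Q, hQ⟩ := exists_nat_ge (8 * N / δ)
  have hQpos : 0 < Q := by
    have : (0 : ℝ) < Q := lt_of_lt_of_le (by positivity) hQ
    exact_mod_cast this
  obtain ⟨α, c, C, hC, hlev⟩ := SAS.levels Q hQpos k
  obtain ⟨C', hC', hlog⟩ := SAS.log_bound (δ / (4 * N)) (by positivity)
  refine ⟨C * C' + α * 2 ^ k + 1, by positivity, ?_⟩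
  intro V _ G
  rcases Nat.lt_or_ge (Fintype.card V) 2 with hn | hn
  · have hsub : Subsingleton V := Fintype.card_le_one_iff_subsingleton.1 (by omega)
    have hG : G.edgeSet = ∅ := by
      rw [SimpleGraph.edgeSet_eq_empty]
      ext a b
      simp [Subsingleton.elim a b]
    refine ⟨G, le_rfl, ?_, ?_⟩
    · rw [hG]
      simp only [Set.ncard_empty, Nat.cast_zero]
      positivity
    · intro u v h
      refine ⟨h, ?_⟩
      have : 0 ≤ (C * C' + α * 2 ^ k + 1) * (G.dist u v : ℝ) ^ ((1 : ℝ) - 1 / (k : ℝ)) := by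
        positivity
      linarith
  set n : ℝ := (Fintype.card V : ℝ) with hndef
  have hn2 : (2 : ℝ) ≤ n := by rw [hndef]; exact_mod_cast hn
  have hn0 : 0 < n := by linarith
  have hn1 : 1 ≤ n := by linarith
  set y : ℝ := n ^ ((1 + δ / 2) / N) with hy
  set z : ℝ := n ^ (δ / (8 * N)) with hz
  have hy1 : 1 ≤ y := Real.one_le_rpow hn1 (by positivity)
  have hz1 : 1 ≤ z := Real.one_le_rpow hn1 (by positivity)
  have hzQ : n ≤ z ^ Q := by
    rw [hz, ← Real.rpow_natCast, ← Real.rpow_mul hn0.le]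
    nth_rewrite 1 [← Real.rpow_one n]
    refine Real.rpow_le_rpow_of_exponent_le hn1 ?_
    have h1 : 8 * N ≤ Q * δ := (div_le_iff₀ hδ).1 hQ
    rw [div_mul_eq_mul_div, le_div_iff₀ (by positivity)]
    linarith
  have hfam : ∀ j : ℕ, ∃ F : Finset (Sym2 V), SAS.SubE G F ∧
      (F.card : ℝ) ≤ C * (n * (y * z ^ 2)) ∧
      ∀ s t, SAS.Rch G ((2 ^ j) ^ k) s t →
        SAS.Rch (SAS.gr F) (G.dist s t + α * (2 ^ j) ^ (k - 1)) s t := by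
    intro j
    have hR : 0 < 2 ^ j := by positivity
    obtain ⟨F, h1, -, h3, E, hE, hP⟩ := hlev V G y z (2 ^ j) hy1 hz1 hzQ hR
    refine ⟨F, h1, h3, ?_⟩
    have hE' : E ≤ α * (2 ^ j) ^ (k - 1) := by
      have e : (2 ^ j) ^ k = (2 ^ j) * (2 ^ j) ^ (k - 1) := by
        rw [← pow_succ']
        congr 1
        omega
      rw [e] at hE
      refine Nat.le_of_mul_le_mul_left (hE.trans (le_of_eq ?_)) hR
      ring
    intro s t hst
    obtain ⟨E', g1, g2, g3⟩ := hP s t hst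
    have hE0 : E' = ∅ := by
      rw [← Finset.card_eq_zero]
      have hlt : (E'.card : ℝ) < 1 := by
        refine lt_of_le_of_lt g2 ?_
        have hb : ((SAS.ball G (c * (2 ^ j) ^ k) s).card : ℝ) ≤ n := by
          rw [hndef]; exact Nat.cast_le.2 (Finset.card_le_univ _)
        have hyN : y ^ N = n ^ (1 + δ / 2) := by
          rw [hy, ← Real.rpow_natCast, ← Real.rpow_mul hn0.le]
          congr 1
          field_simp
        have hlt' : n < y ^ N := by
          rw [hyN]
          nth_rewrite 1 [← Real.rpow_one n]
          exact Real.rpow_lt_rpow_of_exponent_lt (by linarith) (by linarith)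
        rw [inv_mul_eq_div, div_lt_one (by positivity)]
        exact lt_of_le_of_lt hb hlt'
      have : E'.card < 1 := by exact_mod_cast hlt
      omega
    rw [hE0, Finset.union_empty] at g3
    exact g3.len (by omega)
  choose Fj hFsub hFcard hFr using hfam
  set J := Nat.log 2 (Fintype.card V) + 2 with hJ
  set F := (Finset.range J).biUnion Fj with hF
  have hFG : SAS.SubE G F := by
    intro e he
    obtain ⟨j, -, he⟩ := Finset.mem_biUnion.1 he
    exact hFsub j e he
  refine ⟨SAS.gr F, SAS.gr_le hFG, ?_, ?_⟩
  · have h1 : ((SAS.gr F).edgeSet.ncard : ℝ) ≤ F.card := by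
      have : (SAS.gr F).edgeSet ⊆ (F : Set (Sym2 V)) := by
        rw [SAS.gr, SimpleGraph.edgeSet_fromEdgeSet]
        exact Set.sdiff_subset
      have h2 := Set.ncard_le_ncard this (Finset.finite_toSet F)
      rw [Set.ncard_coe_finset] at h2
      exact_mod_cast h2
    have h2 : (F.card : ℝ) ≤ J * (C * (n * (y * z ^ 2))) := by
      have : (F.card : ℝ) ≤ ∑ j ∈ Finset.range J, ((Fj j).card : ℝ) := by
        exact_mod_cast Finset.card_biUnion_le
      refine this.trans ?_
      calc _ ≤ ∑ j ∈ Finset.range J, C * (n * (y * z ^ 2)) :=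
            Finset.sum_le_sum fun j _ => hFcard j
        _ = _ := by simp
    have h3 := hlog (Fintype.card V) (by omega)
    rw [← hJ, ← hndef] at h3
    have h4 : n ^ (δ / (4 * N)) * (n * (y * z ^ 2)) = n ^ (1 + (1 + δ) / N) := by
      have e1 : z ^ 2 = n ^ (δ / (4 * N)) := by
        rw [hz, ← Real.rpow_natCast, ← Real.rpow_mul hn0.le]
        congr 1
        push_cast
        field_simp
        norm_num
      rw [e1, hy]
      nth_rewrite 2 [← Real.rpow_one n]
      rw [← Real.rpow_add hn0, ← Real.rpow_add hn0, ← Real.rpow_add hn0]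
      congr 1
      field_simp
      ring
    calc ((SAS.gr F).edgeSet.ncard : ℝ) ≤ J * (C * (n * (y * z ^ 2))) := h1.trans h2
      _ ≤ (C' * n ^ (δ / (4 * N))) * (C * (n * (y * z ^ 2))) := by gcongr
      _ = C * C' * (n ^ (δ / (4 * N)) * (n * (y * z ^ 2))) := by ring
      _ = C * C' * n ^ (1 + (1 + δ) / N) := by rw [h4]
      _ ≤ _ := by
        refine mul_le_mul_of_nonneg_right ?_ (by positivity)
        have : (0 : ℝ) ≤ α * 2 ^ k := by positivity
        linarith
  · intro u v huv
    by_cases huv' : u = v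
    · subst huv'
      refine ⟨SimpleGraph.Reachable.refl _, ?_⟩
      simp only [SimpleGraph.dist_self, Nat.cast_zero, zero_add]
      positivity
    have hD1 : 1 ≤ G.dist u v := huv.pos_dist_of_ne huv'
    have hDn : G.dist u v ≤ Fintype.card V := by
      obtain ⟨p, hp, hpl⟩ := huv.exists_path_of_dist
      have := hp.length_lt
      omega
    obtain ⟨j, hj, hjD, hjR⟩ := SAS.scale_exists k _ _ hk hD1 hDn
    have hr := ((hFr j u v ((SAS.Rch.of_reach huv).len hjD)).mono
      (SAS.gr_mono (Finset.subset_biUnion_of_mem Fj (Finset.mem_range.2 hj))))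
    refine ⟨hr.reach, ?_⟩
    have h1 : ((SAS.gr F).dist u v : ℝ) ≤ G.dist u v + α * ((2 ^ j : ℕ) : ℝ) ^ (k - 1) := by
      exact_mod_cast hr.dist_le
    refine h1.trans ?_
    have h2 : 0 ≤ (G.dist u v : ℝ) ^ ((1 : ℝ) - 1 / (k : ℝ)) := by positivity
    have h3 : (α : ℝ) * ((2 ^ j : ℕ) : ℝ) ^ (k - 1) ≤
        α * (2 ^ k * (G.dist u v : ℝ) ^ ((1 : ℝ) - 1 / (k : ℝ))) := by gcongr
    have h4 : 0 ≤ (C * C' + 1) * (G.dist u v : ℝ) ^ ((1 : ℝ) - 1 / (k : ℝ)) := by positivity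
    nlinarith
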